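/- arXiv:2212.05152 — 2 statements merged into one kernel-verified Lean document; each statement's English description precedes it below -/
import Mathlib

section
/- Let X and Y be compact metric spaces and let c : X × P(Y) → (−∞,+∞] be proper, bounded below, lower semicontinuous, and convex in the second variable. Extend the operator T to all upper semicontinuous bounded-above functions g : Y → [−∞,∞) by Tg(x) := sup_{σ∈P(Y)} { ∫_Y g dσ − c(x,σ) } (integral with values in [−∞,∞)). Then for every upper semicontinuous bounded-above g one has Tg(x) = inf{ Th(x) : h ∈ C(Y), h ≥ g } for all x ∈ X, and Tg is upper semicontinuous on X. -/
open MeasureTheory Topology Filter Set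
open scoped ENNReal NNReal

noncomputable section

/-- The positive part of an extended real number, as an element of `ℝ≥0∞`. -/
def epos (a : EReal) : ℝ≥0∞ := if a = ⊤ then ⊤ else ENNReal.ofReal a.toReal

/-- Signed integral of an `EReal`-valued function (the natural value when `f` is
bounded above or bounded below). -/
def eint {α : Type*} [MeasurableSpace α] (μ : Measure α) (f : α → EReal) : EReal :=
  ((∫⁻ x, epos (f x) ∂μ : ℝ≥0∞) : EReal) - ((∫⁻ x, epos (-(f x)) ∂μ : ℝ≥0∞) : EReal)

/-- The Dirac measure at a point, as a probability measure. -/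
def diracP {α : Type*} [MeasurableSpace α] (x : α) : ProbabilityMeasure α :=
  ⟨Measure.dirac x, inferInstance⟩

/-- The extension of the operator associated to a cost `c` to extended-real-valued
functions, `Tg(x) = sup_{σ ∈ P(Y)} { ∫ g dσ − c(x,σ) }`. -/
def costOpE {X Y : Type*} [MeasurableSpace Y]
    (c : X → ProbabilityMeasure Y → EReal) (g : Y → EReal) (x : X) : EReal :=
  ⨆ σ : ProbabilityMeasure Y, eint (σ : Measure Y) g - c x σ

theorem epos_eq_toENNReal : epos = EReal.toENNReal := rfl

theorem eint_mono {α : Type*} [MeasurableSpace α] (μ : Measure α) {f g : α → EReal}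
    (h : ∀ x, f x ≤ g x) : eint μ f ≤ eint μ g := by
  simp only [eint, epos_eq_toENNReal]
  refine EReal.sub_le_sub ?_ ?_
  · exact_mod_cast lintegral_mono fun x => EReal.toENNReal_le_toENNReal (h x)
  · exact_mod_cast lintegral_mono fun x =>
      EReal.toENNReal_le_toENNReal (EReal.neg_le_neg_iff.2 (h x))

theorem costOpE_mono {X Y : Type*} [MeasurableSpace Y] (c : X → ProbabilityMeasure Y → EReal)
    {f g : Y → EReal} (h : ∀ y, f y ≤ g y) (x : X) : costOpE c f x ≤ costOpE c g x :=
  iSup_mono fun _ => EReal.sub_le_sub (eint_mono _ h) le_rfl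

theorem eint_coe_eq_integral {α : Type*} [MeasurableSpace α] {μ : Measure α} {f : α → ℝ}
    (hf : Integrable f μ) : eint μ (fun x => (f x : EReal)) = ((∫ x, f x ∂μ : ℝ) : EReal) := by
  have hpos : ∫⁻ x, ENNReal.ofReal (f x) ∂μ ≠ ⊤ := hf.lintegral_lt_top.ne
  have hneg : ∫⁻ x, ENNReal.ofReal (-f x) ∂μ ≠ ⊤ := hf.neg.lintegral_lt_top.ne
  have hepos (a : ℝ) : epos a = ENNReal.ofReal a := by simp [epos]
  rw [integral_eq_lintegral_pos_part_sub_lintegral_neg_part hf, EReal.coe_sub,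
    EReal.coe_ennreal_toReal hpos, EReal.coe_ennreal_toReal hneg]
  simp only [eint, ← EReal.coe_neg, hepos]

/-- Monotone convergence for the signed integral along a decreasing sequence. -/
theorem tendsto_eint_of_antitone {α : Type*} [MeasurableSpace α] {μ : Measure α}
    {f : ℕ → α → EReal} {g : α → EReal} (hf : ∀ n, Measurable (f n))
    (hanti : ∀ x, Antitone fun n => f n x)
    (hfin : ∫⁻ x, epos (f 0 x) ∂μ ≠ ⊤)
    (hlim : ∀ x, Tendsto (fun n => f n x) atTop (𝓝 (g x))) :
    Tendsto (fun n => eint μ (f n)) atTop (𝓝 (eint μ g)) := by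
  simp only [eint, epos_eq_toENNReal, sub_eq_add_neg] at hfin ⊢
  have hpos : Tendsto (fun n => ∫⁻ x, (f n x).toENNReal ∂μ) atTop
      (𝓝 (∫⁻ x, (g x).toENNReal ∂μ)) := by
    refine lintegral_tendsto_of_tendsto_of_antitone (fun n => ?_) (.of_forall fun x => ?_) hfin
      (.of_forall fun x => (EReal.continuous_toENNReal.tendsto _).comp (hlim x))
    · exact (EReal.continuous_toENNReal.measurable.comp (hf n)).aemeasurable
    · exact fun m n h => EReal.toENNReal_le_toENNReal (hanti x h)
  have hneg : Tendsto (fun n => ∫⁻ x, (-(f n x)).toENNReal ∂μ) atTop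
      (𝓝 (∫⁻ x, (-(g x)).toENNReal ∂μ)) := by
    refine lintegral_tendsto_of_tendsto_of_monotone (fun n => ?_) (.of_forall fun x => ?_)
      (.of_forall fun x => ((EReal.continuous_toENNReal.comp continuous_neg).tendsto _).comp
        (hlim x))
    · exact ((EReal.continuous_toENNReal.comp continuous_neg).measurable.comp (hf n)).aemeasurable
    · exact fun m n h => EReal.toENNReal_le_toENNReal (EReal.neg_le_neg_iff.2 (hanti x h))
  have hgfin : ∫⁻ x, (g x).toENNReal ∂μ ≠ ⊤ :=
    ((lintegral_mono fun x => EReal.toENNReal_le_toENNReal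
      ((hanti x).le_of_tendsto (hlim x) 0)).trans_lt hfin.lt_top).ne
  refine (EReal.continuousAt_add (.inl ?_) (.inl ?_)).tendsto.comp
    (((continuous_coe_ennreal_ereal.tendsto _).comp hpos).prodMk_nhds
      ((continuous_neg.tendsto _).comp ((continuous_coe_ennreal_ereal.tendsto _).comp hneg)))
  · simpa using hgfin
  · exact EReal.coe_ennreal_ne_bot _

/-- An upper semicontinuous function that is bounded above on a metric space is the pointwise
limit of a decreasing sequence of continuous real functions. -/
theorem UpperSemicontinuous.exists_antitone_tendsto_continuousMap {Y : Type*}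
    [PseudoMetricSpace Y] {g : Y → EReal} (hg : UpperSemicontinuous g)
    (hgbdd : ∃ M : ℝ, ∀ y, g y ≤ (M : EReal)) :
    ∃ f : ℕ → C(Y, ℝ), (∀ y, Antitone fun n => f n y) ∧ (∀ n y, g y ≤ (f n y : EReal)) ∧
      ∀ y, Tendsto (fun n => (f n y : EReal)) atTop (𝓝 (g y)) := by
  obtain ⟨M₀, hM₀⟩ := hgbdd
  obtain ⟨M, hM, hM0⟩ : ∃ M : ℝ, (∀ y, g y ≤ (M : EReal)) ∧ 0 ≤ M :=
    ⟨max M₀ 0, fun y => (hM₀ y).trans (by exact_mod_cast le_max_left _ _), le_max_right _ _⟩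
  let u : ℕ → Y → ℝ := fun n z => (max (g z) ((-(n : ℝ) : ℝ) : EReal)).toReal
  have hu (n : ℕ) (z : Y) : (u n z : EReal) = max (g z) ((-(n : ℝ) : ℝ) : EReal) := by
    refine EReal.coe_toReal (ne_top_of_le_ne_top (EReal.coe_ne_top M) ?_)
      (ne_bot_of_le_ne_bot (EReal.coe_ne_bot _) (le_max_right _ _))
    refine max_le (hM z) ?_
    have : (0 : ℝ) ≤ n := n.cast_nonneg
    exact_mod_cast (by linarith : -(n : ℝ) ≤ M)
  have hule {n : ℕ} {z : Y} {b : ℝ} (h : g z ≤ b) (hn : -(n : ℝ) ≤ b) : u n z ≤ b := by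
    rw [← EReal.coe_le_coe_iff, hu]
    exact max_le h (by exact_mod_cast hn)
  have huM (n : ℕ) (z : Y) : u n z ≤ M :=
    hule (hM z) (by have : (0 : ℝ) ≤ n := n.cast_nonneg
                    linarith)
  have hnd (n : ℕ) (y z : Y) : 0 ≤ (n : ℝ) * dist y z := by positivity
  have hbdd (n : ℕ) (y : Y) : BddAbove (range fun z => u n z - n * dist y z) := by
    refine ⟨M, ?_⟩
    rintro _ ⟨z, rfl⟩
    have := huM n z
    have := hnd n y z
    dsimp only
    linarith
  let F : ℕ → Y → ℝ := fun n y => ⨆ z, (u n z - n * dist y z)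
  have hlip (n : ℕ) : LipschitzWith (n : ℝ≥0) (F n) := by
    refine LipschitzWith.of_le_add_mul _ fun x y => ?_
    have : Nonempty Y := ⟨x⟩
    refine ciSup_le fun z => ?_
    have h1 : u n z - n * dist y z ≤ F n y := le_ciSup (hbdd n y) z
    have h2 : (n : ℝ) * dist y z ≤ n * (dist x y + dist x z) :=
      mul_le_mul_of_nonneg_left (by rw [dist_comm x y]; exact dist_triangle _ _ _) n.cast_nonneg
    simp only [NNReal.coe_natCast]
    linarith
  have hle (n : ℕ) (y : Y) : g y ≤ (F n y : EReal) := by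
    have h1 : u n y ≤ F n y := by simpa using le_ciSup (hbdd n y) y
    calc g y ≤ (u n y : EReal) := by rw [hu]; exact le_max_left _ _
      _ ≤ F n y := by exact_mod_cast h1
  refine ⟨fun n => ⟨F n, (hlip n).continuous⟩, fun y m n hmn => ?_, hle, fun y => ?_⟩
  · refine ciSup_mono (hbdd m y) fun z => ?_
    have hmn' : (m : ℝ) ≤ n := by exact_mod_cast hmn
    have h1 : u n z ≤ u m z := by
      rw [← EReal.coe_le_coe_iff, hu, hu]
      exact max_le_max le_rfl (by exact_mod_cast neg_le_neg hmn')
    have h2 : (m : ℝ) * dist y z ≤ n * dist y z := mul_le_mul_of_nonneg_right hmn' dist_nonneg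
    linarith
  · refine tendsto_order.2 ⟨fun a ha => .of_forall fun n => ha.trans_le (hle n y), fun a ha => ?_⟩
    obtain ⟨b, hgb, hba⟩ := EReal.lt_iff_exists_real_btwn.1 ha
    obtain ⟨δ, hδ, hball⟩ := Metric.eventually_nhds_iff.1 (hg y b hgb)
    have : Nonempty Y := ⟨y⟩
    filter_upwards [tendsto_natCast_atTop_atTop.eventually_ge_atTop (-b),
      tendsto_natCast_atTop_atTop.eventually_ge_atTop ((M - b) / δ)] with n hn1 hn2
    refine lt_of_le_of_lt ?_ hba
    refine EReal.coe_le_coe_iff.2 (ciSup_le fun z => ?_)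
    rcases lt_or_ge (dist z y) δ with hz | hz
    · have := hule (n := n) (hball hz).le (by linarith)
      have := hnd n y z
      linarith
    · rw [div_le_iff₀ hδ] at hn2
      have h1 : (n : ℝ) * δ ≤ n * dist y z :=
        mul_le_mul_of_nonneg_left (by rwa [dist_comm]) n.cast_nonneg
      have := huM n z
      linarith

/-- The supremum over a compact space of a jointly upper semicontinuous function is upper
semicontinuous. -/
theorem UpperSemicontinuous.iSup_of_compactSpace {X S γ : Type*} [TopologicalSpace X]
    [TopologicalSpace S] [CompactSpace S] [CompleteLinearOrder γ] [DenselyOrdered γ]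
    {F : X × S → γ} (hF : UpperSemicontinuous F) :
    UpperSemicontinuous fun x => ⨆ s, F (x, s) := by
  intro x t ht
  obtain ⟨t', h1, h2⟩ := exists_between ht
  have := isCompact_univ.eventually_forall_of_forall_eventually (x₀ := x) (K := (univ : Set S))
    (P := fun x s => F (x, s) < t')
    fun s _ => hF (x, s) t' ((le_iSup (fun s => F (x, s)) s).trans_lt h1)
  filter_upwards [this] with x' hx'
  exact (iSup_le fun s => (hx' s (mem_univ s)).le).trans_lt h2

theorem upperSemicontinuous_eint_coe_sub {X Y : Type*} [TopologicalSpace X]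
    [TopologicalSpace Y] [CompactSpace Y] [MeasurableSpace Y] [OpensMeasurableSpace Y]
    {c : X → ProbabilityMeasure Y → EReal}
    (hlsc : LowerSemicontinuous (fun p : X × ProbabilityMeasure Y => c p.1 p.2)) (h : C(Y, ℝ)) :
    UpperSemicontinuous fun p : X × ProbabilityMeasure Y =>
      eint (p.2 : Measure Y) (fun y => (h y : EReal)) - c p.1 p.2 := by
  have hint (σ : ProbabilityMeasure Y) : eint (σ : Measure Y) (fun y => (h y : EReal)) =
      ((∫ y, h y ∂(σ : Measure Y) : ℝ) : EReal) :=
    eint_coe_eq_integral (h.continuous.integrable_of_hasCompactSupport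
      (HasCompactSupport.of_compactSpace _))
  simp only [hint, sub_eq_add_neg]
  have hcont : Continuous fun σ : ProbabilityMeasure Y => ∫ y, h y ∂(σ : Measure Y) :=
    ProbabilityMeasure.continuous_integral_boundedContinuousFunction
      (BoundedContinuousFunction.mkOfCompact h)
  refine UpperSemicontinuous.add' ?_ ?_ fun p => EReal.continuousAt_add (.inl ?_) (.inl ?_)
  · exact (continuous_coe_real_ereal.comp (hcont.comp continuous_snd)).upperSemicontinuous
  · exact continuous_neg.comp_lowerSemicontinuous_antitone hlsc
      fun a b hab => EReal.neg_le_neg_iff.2 hab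
  · exact EReal.coe_ne_top _
  · exact EReal.coe_ne_bot _

theorem upperSemicontinuous_costOpE_coe {X Y : Type*} [TopologicalSpace X]
    [TopologicalSpace Y] [T2Space Y] [CompactSpace Y] [MeasurableSpace Y] [BorelSpace Y]
    {c : X → ProbabilityMeasure Y → EReal}
    (hlsc : LowerSemicontinuous (fun p : X × ProbabilityMeasure Y => c p.1 p.2)) (h : C(Y, ℝ)) :
    UpperSemicontinuous (costOpE c fun y => (h y : EReal)) :=
  (upperSemicontinuous_eint_coe_sub hlsc h).iSup_of_compactSpace

/-- The operator is continuous along decreasing sequences of continuous functions. -/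
theorem iInf_costOpE_le_of_antitone {X Y : Type*} [TopologicalSpace X]
    [TopologicalSpace Y] [T2Space Y] [CompactSpace Y] [MeasurableSpace Y] [BorelSpace Y]
    {c : X → ProbabilityMeasure Y → EReal} (hbot : ∀ x σ, c x σ ≠ ⊥)
    (hlsc : LowerSemicontinuous (fun p : X × ProbabilityMeasure Y => c p.1 p.2))
    {f : ℕ → C(Y, ℝ)} {g : Y → EReal} (hanti : ∀ y, Antitone fun n => f n y)
    (hlim : ∀ y, Tendsto (fun n => (f n y : EReal)) atTop (𝓝 (g y))) (x : X) :
    ⨅ n, costOpE c (fun y => (f n y : EReal)) x ≤ costOpE c g x := by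
  refine le_of_forall_lt_imp_le_of_dense fun t ht => ?_
  let K : ℕ → Set (ProbabilityMeasure Y) :=
    fun n => {σ | t ≤ eint (σ : Measure Y) (fun y => (f n y : EReal)) - c x σ}
  have hanti' (y : Y) : Antitone fun n => (f n y : EReal) :=
    fun m n hmn => EReal.coe_le_coe_iff.2 (hanti y hmn)
  have hKcl (n : ℕ) : IsClosed (K n) :=
    (upperSemicontinuous_iff_isClosed_preimage.1 (upperSemicontinuous_eint_coe_sub hlsc (f n))
      t).preimage (Continuous.prodMk_right x)
  obtain ⟨σ, hσ⟩ := IsCompact.nonempty_iInter_of_sequence_nonempty_isCompact_isClosed K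
    (fun n σ hσ => hσ.trans
      (EReal.sub_le_sub (eint_mono _ fun y => hanti' y n.le_succ) le_rfl))
    (fun n => by
      obtain ⟨σ, hσ⟩ := lt_iSup_iff.1 (ht.trans_le (iInf_le _ n))
      exact ⟨σ, hσ.le⟩)
    (hKcl 0).isCompact hKcl
  have hσ' (n : ℕ) : t ≤ eint (σ : Measure Y) (fun y => (f n y : EReal)) - c x σ :=
    mem_iInter.1 hσ n
  refine le_trans ?_ (le_iSup _ σ)
  have htend := tendsto_eint_of_antitone (μ := (σ : Measure Y))
    (fun n => (continuous_coe_real_ereal.comp (f n).continuous).measurable) hanti' ?_ hlim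
  · by_cases htop : c x σ = ⊤
    · have := hσ' 0
      simp only [htop, EReal.sub_top, le_bot_iff] at this
      simp [this]
    · rw [EReal.le_sub_iff_add_le (.inl (hbot x σ)) (.inl htop)]
      exact ge_of_tendsto' htend fun n =>
        (EReal.le_sub_iff_add_le (.inl (hbot x σ)) (.inl htop)).1 (hσ' n)
  · have : Integrable (f 0) (σ : Measure Y) := (f 0).continuous.integrable_of_hasCompactSupport
      (HasCompactSupport.of_compactSpace _)
    simpa [epos] using this.lintegral_lt_top.ne

/-- For an upper semicontinuous bounded-above `g`, the extended operator is the
infimum of its values over continuous majorants of `g`, and `Tg` is upper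
semicontinuous. -/
theorem costOpE_eq_iInf_continuous
    {X Y : Type*} [MetricSpace X] [CompactSpace X] [MeasurableSpace X] [BorelSpace X]
    [MetricSpace Y] [CompactSpace Y] [MeasurableSpace Y] [BorelSpace Y]
    (c : X → ProbabilityMeasure Y → EReal)
    (hbot : ∀ x σ, c x σ ≠ ⊥)
    (hbdd : ∃ m : ℝ, ∀ x σ, (m : EReal) ≤ c x σ)
    (hproper : ∀ x, ∃ σ, c x σ ≠ ⊤)
    (hlsc : LowerSemicontinuous (fun p : X × ProbabilityMeasure Y => c p.1 p.2))
    (hconv : ∀ (x : X) (σ₁ σ₂ τ : ProbabilityMeasure Y) (a b : ℝ≥0), a + b = 1 →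
        (τ : Measure Y) = a • (σ₁ : Measure Y) + b • (σ₂ : Measure Y) →
        c x τ ≤ ((a : ℝ) : EReal) * c x σ₁ + ((b : ℝ) : EReal) * c x σ₂)
    (g : Y → EReal) (hg : UpperSemicontinuous g) (hgbdd : ∃ M : ℝ, ∀ y, g y ≤ (M : EReal)) :
    (∀ x, costOpE c g x =
        ⨅ h ∈ {h : C(Y, ℝ) | ∀ y, g y ≤ ((h y : ℝ) : EReal)},
          costOpE c (fun y => ((h y : ℝ) : EReal)) x) ∧
    UpperSemicontinuous (costOpE c g) := by
  obtain ⟨f, hanti, hgf, hlim⟩ := hg.exists_antitone_tendsto_continuousMap hgbdd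
  have hle := iInf_costOpE_le_of_antitone hbot hlsc hanti hlim
  refine ⟨fun x => le_antisymm (le_iInf₂ fun h hh => costOpE_mono c hh x)
    ((le_iInf fun n => iInf₂_le (f n) (hgf n)).trans (hle x)), ?_⟩
  have heq : costOpE c g = fun x => ⨅ n, costOpE c (fun y => (f n y : EReal)) x :=
    funext fun x => le_antisymm (le_iInf fun n => costOpE_mono c (hgf n) x) (hle x)
  rw [heq]
  exact upperSemicontinuous_iInf fun n => upperSemicontinuous_costOpE_coe hlsc (f n)
end
end

section
/- Let X and Y be compact metric spaces and let c : X × P(Y) → (−∞,+∞] be bounded below and lower semicontinuous (P(Y) with the weak* topology), with σ ↦ c(x,σ) proper and convex for each x. Fix μ ∈ P(X). Then: (1) on the set K(μ,ν) of couplings of μ and ν, the map π ↦ ∫_X c(x, π_x) dμ(x) (where (π_x) is a disintegration of π with respect to μ) is convex and lower semicontinuous for the weak* topology on couplings; (2) the optimal weak transport value V_c(μ,ν) := inf{ ∫_X c(x,π_x) dμ(x) : π ∈ K(μ,ν) } is a convex and weak*-lower semicontinuous function of ν ∈ P(Y). -/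
open MeasureTheory Topology Filter Set
open scoped ENNReal NNReal

noncomputable section

/-- `π` is a coupling (transport plan) of `μ` and `ν`. -/
def IsCoupling {X Y : Type*} [MeasurableSpace X] [MeasurableSpace Y]
    (π : ProbabilityMeasure (X × Y)) (μ : ProbabilityMeasure X)
    (ν : ProbabilityMeasure Y) : Prop :=
  (π : Measure (X × Y)).map Prod.fst = (μ : Measure X) ∧
  (π : Measure (X × Y)).map Prod.snd = (ν : Measure Y)

/-- `κ` is a disintegration of the plan `π` with respect to `μ`. -/
def IsDisintegration {X Y : Type*} [MeasurableSpace X] [MeasurableSpace Y]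
    (π : ProbabilityMeasure (X × Y)) (μ : ProbabilityMeasure X)
    (κ : X → ProbabilityMeasure Y) : Prop :=
  Measurable (fun x => (κ x : Measure Y)) ∧
  ∀ (A : Set X) (B : Set Y), MeasurableSet A → MeasurableSet B →
    (π : Measure (X × Y)) (A ×ˢ B) = ∫⁻ x in A, (κ x : Measure Y) B ∂(μ : Measure X)

/-- The cost `π ↦ ∫_X c(x, π_x) dμ(x)` of a transport plan, computed through its
(essentially unique) disintegration with respect to `μ`. -/
def planCost {X Y : Type*} [MeasurableSpace X] [MeasurableSpace Y]
    (μ : ProbabilityMeasure X) (c : X → ProbabilityMeasure Y → EReal)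
    (π : ProbabilityMeasure (X × Y)) : EReal :=
  ⨅ κ ∈ {κ : X → ProbabilityMeasure Y | IsDisintegration π μ κ},
    eint (μ : Measure X) (fun x => c x (κ x))

/-- The optimal weak transport cost `V_c(μ,ν)`. -/
def weakTransport {X Y : Type*} [MeasurableSpace X] [MeasurableSpace Y]
    (c : X → ProbabilityMeasure Y → EReal)
    (μ : ProbabilityMeasure X) (ν : ProbabilityMeasure Y) : EReal :=
  ⨅ π ∈ {π : ProbabilityMeasure (X × Y) | IsCoupling π μ ν}, planCost μ c π

/-- A sequence of continuous functions, bounded by one, whose multiples are dense in `C(Y, ℝ)`. -/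
def testFun (Y : Type*) [MetricSpace Y] [CompactSpace Y] (n : ℕ) : C(Y, ℝ) :=
  (1 + ‖TopologicalSpace.denseSeq C(Y, ℝ) n‖)⁻¹ • TopologicalSpace.denseSeq C(Y, ℝ) n

/-- The sequence of integrals of a probability measure against `testFun`. -/
def moments {Y : Type*} [MetricSpace Y] [CompactSpace Y] [MeasurableSpace Y]
    (σ : ProbabilityMeasure Y) (n : ℕ) : ℝ := ∫ y, testFun Y n y ∂(σ : Measure Y)

section Moments

variable {Y : Type*} [MetricSpace Y] [CompactSpace Y]

lemma norm_testFun_le_one (n : ℕ) : ‖testFun Y n‖ ≤ 1 := by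
  rw [testFun, norm_smul, norm_inv, Real.norm_of_nonneg (by positivity),
    inv_mul_le_one₀ (by positivity)]
  linarith

lemma norm_testFun_apply_le_one (n : ℕ) (y : Y) : ‖testFun Y n y‖ ≤ 1 :=
  ((testFun Y n).norm_coe_le_norm y).trans (norm_testFun_le_one n)

variable [MeasurableSpace Y]

lemma norm_moments_le_one (σ : ProbabilityMeasure Y) (n : ℕ) : ‖moments σ n‖ ≤ 1 := by
  simpa [moments] using norm_integral_le_of_norm_le_const (μ := (σ : Measure Y))
    (ae_of_all _ (norm_testFun_apply_le_one (Y := Y) n))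

variable [BorelSpace Y]

lemma integrable_continuousMap (σ : Measure Y) [IsFiniteMeasure σ] (f : C(Y, ℝ)) :
    Integrable f σ :=
  f.continuous.integrable_of_hasCompactSupport (HasCompactSupport.of_compactSpace _)

lemma continuous_moments : Continuous (moments : ProbabilityMeasure Y → ℕ → ℝ) :=
  continuous_pi fun n => ProbabilityMeasure.continuous_integral_continuousMap (testFun Y n)

lemma continuous_integral_left (σ : Measure Y) [IsProbabilityMeasure σ] :
    Continuous fun f : C(Y, ℝ) => ∫ y, f y ∂σ := by
  refine LipschitzWith.continuous (K := 1) (LipschitzWith.of_dist_le_mul fun f g => ?_)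
  rw [dist_eq_norm, dist_eq_norm,
    ← integral_sub (integrable_continuousMap σ f) (integrable_continuousMap σ g)]
  simpa using norm_integral_le_of_norm_le_const (μ := σ)
    (ae_of_all _ ((f - g).norm_coe_le_norm))

lemma moments_injective : Function.Injective (moments : ProbabilityMeasure Y → ℕ → ℝ) := by
  intro σ τ h
  have key : (fun f : C(Y, ℝ) => ∫ y, f y ∂(σ : Measure Y)) =
      fun f => ∫ y, f y ∂(τ : Measure Y) := by
    refine (TopologicalSpace.denseRange_denseSeq C(Y, ℝ)).equalizer (continuous_integral_left _)
      (continuous_integral_left _) (funext fun n => ?_)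
    have := congrFun h n
    simp only [moments, testFun, ContinuousMap.smul_apply, integral_smul] at this
    exact smul_right_injective ℝ (inv_ne_zero (by positivity)) this
  apply ProbabilityMeasure.toMeasure_injective
  exact ext_of_forall_integral_eq_of_IsFiniteMeasure fun f => congrFun key f.toContinuousMap

lemma isClosedEmbedding_moments :
    IsClosedEmbedding (moments : ProbabilityMeasure Y → ℕ → ℝ) :=
  continuous_moments.isClosedEmbedding moments_injective

lemma measurable_moments : Measurable (moments : ProbabilityMeasure Y → ℕ → ℝ) := by
  refine measurable_pi_lambda _ fun n => ?_
  exact (StronglyMeasurable.integral_kernel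
    (κ := ⟨((↑) : ProbabilityMeasure Y → Measure Y), measurable_subtype_coe⟩)
    (testFun Y n).continuous.stronglyMeasurable).measurable

instance opensMeasurableSpace_probabilityMeasure :
    OpensMeasurableSpace (ProbabilityMeasure Y) where
  borel_le := by
    refine MeasurableSpace.generateFrom_le fun U hU => ?_
    obtain ⟨V, hV, rfl⟩ := isClosedEmbedding_moments.isInducing.isOpen_iff.1 hU
    exact measurable_moments hV.measurableSet

end Moments

open ProbabilityTheory

section Disintegration

variable {X Y : Type*} [MeasurableSpace X] [MeasurableSpace Y]

/-- A measurable family of probability measures, as a kernel. -/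
def toKernel (κ : X → ProbabilityMeasure Y) (hκ : Measurable κ) : Kernel X Y :=
  ⟨fun x => (κ x : Measure Y), measurable_subtype_coe.comp hκ⟩

instance (κ : X → ProbabilityMeasure Y) (hκ : Measurable κ) : IsMarkovKernel (toKernel κ hκ) :=
  ⟨fun x => inferInstanceAs (IsProbabilityMeasure (κ x : Measure Y))⟩

lemma IsDisintegration.measurable {π : ProbabilityMeasure (X × Y)} {μ : ProbabilityMeasure X}
    {κ : X → ProbabilityMeasure Y} (h : IsDisintegration π μ κ) : Measurable κ :=
  h.1.subtype_mk

lemma IsDisintegration.eq_compProd {π : ProbabilityMeasure (X × Y)} {μ : ProbabilityMeasure X}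
    {κ : X → ProbabilityMeasure Y} (h : IsDisintegration π μ κ) :
    (π : Measure (X × Y)) = (μ : Measure X) ⊗ₘ toKernel κ h.measurable := by
  refine Measure.ext_prod fun {s t} hs ht => ?_
  rw [h.2 s t hs ht, Measure.compProd_apply_prod hs ht]
  rfl

lemma exists_isDisintegration [StandardBorelSpace Y] {π : ProbabilityMeasure (X × Y)}
    {μ : ProbabilityMeasure X} (h : (π : Measure (X × Y)).map Prod.fst = (μ : Measure X)) :
    ∃ κ, IsDisintegration π μ κ := by
  have : Nonempty Y := ⟨π.nonempty.some.2⟩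
  refine ⟨fun x => ⟨(π : Measure (X × Y)).condKernel x, inferInstance⟩,
    (π : Measure (X × Y)).condKernel.measurable, fun A B hA hB => ?_⟩
  conv_lhs => rw [← Measure.disintegrate (π : Measure (X × Y)) (π : Measure (X × Y)).condKernel,
    Measure.compProd_apply_prod hA hB]
  rw [Measure.fst, h]
  rfl

lemma IsDisintegration.map_fst {π : ProbabilityMeasure (X × Y)} {μ : ProbabilityMeasure X}
    {κ : X → ProbabilityMeasure Y} (h : IsDisintegration π μ κ) :
    (π : Measure (X × Y)).map Prod.fst = (μ : Measure X) := by
  rw [h.eq_compProd]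
  exact Measure.fst_compProd _ _

/-- The convex combination of two probability measures. -/
def mix (a b : ℝ≥0) (hab : a + b = 1) {Z : Type*} [MeasurableSpace Z]
    (σ τ : ProbabilityMeasure Z) : ProbabilityMeasure Z :=
  ⟨a • (σ : Measure Z) + b • (τ : Measure Z), ⟨by
    simp only [Measure.add_apply, Measure.smul_apply, measure_univ, ENNReal.smul_def, smul_eq_mul,
      mul_one]
    exact_mod_cast hab⟩⟩

lemma coe_mix {a b : ℝ≥0} (hab : a + b = 1) {Z : Type*} [MeasurableSpace Z]
    (σ τ : ProbabilityMeasure Z) :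
    (mix a b hab σ τ : Measure Z) = a • (σ : Measure Z) + b • (τ : Measure Z) := rfl

lemma measurable_mix {a b : ℝ≥0} (hab : a + b = 1) {κ₁ κ₂ : X → ProbabilityMeasure Y}
    (h₁ : Measurable κ₁) (h₂ : Measurable κ₂) :
    Measurable fun x => mix a b hab (κ₁ x) (κ₂ x) := by
  refine Measurable.subtype_mk (Measure.measurable_of_measurable_coe _ fun s hs => ?_)
  simp only [Measure.add_apply, Measure.smul_apply]
  have m₁ := (Measure.measurable_coe hs).comp (measurable_subtype_coe.comp h₁)
  have m₂ := (Measure.measurable_coe hs).comp (measurable_subtype_coe.comp h₂)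
  exact (m₁.const_smul a).add (m₂.const_smul b)

lemma IsDisintegration.mix {π₁ π₂ π : ProbabilityMeasure (X × Y)} {μ : ProbabilityMeasure X}
    {κ₁ κ₂ : X → ProbabilityMeasure Y} {a b : ℝ≥0} (hab : a + b = 1)
    (h₁ : IsDisintegration π₁ μ κ₁) (h₂ : IsDisintegration π₂ μ κ₂)
    (hπ : (π : Measure (X × Y)) = a • (π₁ : Measure (X × Y)) + b • (π₂ : Measure (X × Y))) :
    IsDisintegration π μ fun x => mix a b hab (κ₁ x) (κ₂ x) := by
  refine ⟨measurable_subtype_coe.comp (measurable_mix hab h₁.measurable h₂.measurable),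
    fun A B hA hB => ?_⟩
  have m₁ : Measurable fun x => (κ₁ x : Measure Y) B := (Measure.measurable_coe hB).comp h₁.1
  have m₂ : Measurable fun x => (κ₂ x : Measure Y) B := (Measure.measurable_coe hB).comp h₂.1
  simp only [hπ, coe_mix, Measure.add_apply, Measure.smul_apply, h₁.2 A B hA hB, h₂.2 A B hA hB,
    ENNReal.smul_def, smul_eq_mul]
  rw [lintegral_add_left (m₁.const_mul _), lintegral_const_mul _ m₁, lintegral_const_mul _ m₂]

end Disintegration

section MomentSpace

variable {X Y : Type*} [MeasurableSpace X] [MetricSpace Y] [CompactSpace Y] [MeasurableSpace Y]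
  [BorelSpace Y]

lemma moments_mix {a b : ℝ≥0} (hab : a + b = 1) (σ τ : ProbabilityMeasure Y) (n : ℕ) :
    moments (mix a b hab σ τ) n = a * moments σ n + b * moments τ n := by
  have h₁ := integrable_continuousMap (σ : Measure Y) (testFun Y n)
  have h₂ := integrable_continuousMap (τ : Measure Y) (testFun Y n)
  simp only [moments, coe_mix]
  rw [integral_add_measure (h₁.smul_measure_nnreal) (h₂.smul_measure_nnreal),
    integral_smul_nnreal_measure, integral_smul_nnreal_measure]
  simp [NNReal.smul_def]

/-- The product of `μ` with a finite measure on `ℕ` charging every point. -/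
def momentMeasure (μ : ProbabilityMeasure X) : Measure (X × ℕ) :=
  (μ : Measure X).prod (Measure.count : Measure ℕ).toFinite

instance (μ : ProbabilityMeasure X) : IsFiniteMeasure (momentMeasure μ) := by
  unfold momentMeasure; infer_instance

lemma ae_forall_of_ae_momentMeasure {μ : ProbabilityMeasure X} {p : X × ℕ → Prop}
    (h : ∀ᵐ z ∂momentMeasure μ, p z) : ∀ᵐ x ∂(μ : Measure X), ∀ n, p (x, n) := by
  filter_upwards [Measure.ae_ae_of_ae_prod h] with x hx
  rwa [ae_toFinite, Measure.ae_count_iff] at hx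

/-- The moments of a family of probability measures, as a function of the parameter and index. -/
def kernelMoments (κ : X → ProbabilityMeasure Y) (p : X × ℕ) : ℝ := moments (κ p.1) p.2

lemma measurable_kernelMoments {κ : X → ProbabilityMeasure Y} (hκ : Measurable κ) :
    Measurable (kernelMoments κ) :=
  measurable_from_prod_countable_left fun n =>
    (measurable_pi_apply n).comp (measurable_moments.comp hκ)

lemma memLp_kernelMoments (μ : ProbabilityMeasure X) {κ : X → ProbabilityMeasure Y}
    (hκ : Measurable κ) : MemLp (kernelMoments κ) 2 (momentMeasure μ) :=
  MemLp.of_bound (measurable_kernelMoments hκ).aestronglyMeasurable 1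
    (ae_of_all _ fun p => norm_moments_le_one (κ p.1) p.2)

/-- The lower semicontinuity of the integral cost for strong convergence of the moments. -/
lemma lintegral_le_of_tendsto_kernelMoments {μ : ProbabilityMeasure X}
    {C : X → ProbabilityMeasure Y → ℝ≥0∞}
    (hCm : Measurable fun p : X × ProbabilityMeasure Y => C p.1 p.2)
    (hC : ∀ x, LowerSemicontinuous (C x)) {t : ℝ≥0∞}
    {κs : ℕ → X → ProbabilityMeasure Y} {κ : X → ProbabilityMeasure Y}
    (hκs : ∀ k, Measurable (κs k))
    {fs : ℕ → Lp ℝ 2 (momentMeasure μ)} {f : Lp ℝ 2 (momentMeasure μ)}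
    (hfs : ∀ k, fs k =ᵐ[momentMeasure μ] kernelMoments (κs k))
    (hf : f =ᵐ[momentMeasure μ] kernelMoments κ) (hlim : Tendsto fs atTop (𝓝 f))
    (ht : ∀ k, ∫⁻ x, C x (κs k x) ∂(μ : Measure X) ≤ t) :
    ∫⁻ x, C x (κ x) ∂(μ : Measure X) ≤ t := by
  obtain ⟨φ, -, hφ⟩ := (tendstoInMeasure_of_tendsto_Lp hlim).exists_seq_tendsto_ae
  have hae : ∀ᵐ z ∂momentMeasure μ,
      Tendsto (fun k => kernelMoments (κs (φ k)) z) atTop (𝓝 (kernelMoments κ z)) := by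
    filter_upwards [hφ, ae_all_iff.2 hfs, hf] with z h₁ h₂ h₃
    simpa only [h₂, h₃] using h₁
  have hconv : ∀ᵐ x ∂(μ : Measure X), Tendsto (fun k => κs (φ k) x) atTop (𝓝 (κ x)) := by
    filter_upwards [ae_forall_of_ae_momentMeasure hae] with x hx
    exact isClosedEmbedding_moments.isInducing.tendsto_nhds_iff.2 (tendsto_pi_nhds.2 hx)
  calc ∫⁻ x, C x (κ x) ∂(μ : Measure X)
      ≤ ∫⁻ x, liminf (fun k => C x (κs (φ k) x)) atTop ∂(μ : Measure X) := by
        refine lintegral_mono_ae ?_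
        filter_upwards [hconv] with x hx
        exact ((hC x).lowerSemicontinuousAt (κ x)).le_liminf.trans (liminf_le_liminf_of_le hx)
    _ ≤ liminf (fun k => ∫⁻ x, C x (κs (φ k) x) ∂(μ : Measure X)) atTop :=
        lintegral_liminf_le fun k => hCm.comp (measurable_id.prodMk (hκs (φ k)))
    _ ≤ t := (liminf_le_liminf (Eventually.of_forall fun k => ht (φ k))).trans_eq
        (liminf_const t)

end MomentSpace

section Pairing

variable {X Y : Type*} [MetricSpace X] [MetricSpace Y] [CompactSpace Y]

/-- The function on `X × Y` whose integral against a plan is the pairing of `g` with the moments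
of its disintegration. -/
def momentDual (g : BoundedContinuousFunction (X × ℕ) ℝ) (p : X × Y) : ℝ :=
  ∫ n, g (p.1, n) * testFun Y n p.2 ∂(Measure.count : Measure ℕ).toFinite

lemma norm_mul_testFun_le (g : BoundedContinuousFunction (X × ℕ) ℝ) (z : X × ℕ) (y : Y) :
    ‖g z * testFun Y z.2 y‖ ≤ ‖g‖ := by
  rw [norm_mul]
  exact (mul_le_of_le_one_right (norm_nonneg _) (norm_testFun_apply_le_one _ _)).trans
    (g.norm_coe_le_norm z)

lemma continuous_momentDual (g : BoundedContinuousFunction (X × ℕ) ℝ) :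
    Continuous (momentDual g : X × Y → ℝ) := by
  refine continuous_of_dominated (bound := fun _ => ‖g‖)
    (fun p => (Measurable.of_discrete).aestronglyMeasurable)
    (fun p => ae_of_all _ fun n => norm_mul_testFun_le g (p.1, n) p.2) (integrable_const _)
    (ae_of_all _ fun n => ?_)
  fun_prop

variable [CompactSpace X] [MeasurableSpace X] [BorelSpace X] [MeasurableSpace Y] [BorelSpace Y]

lemma integral_kernelMoments_mul {μ : ProbabilityMeasure X} {π : ProbabilityMeasure (X × Y)}
    {κ : X → ProbabilityMeasure Y} (h : IsDisintegration π μ κ)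
    (g : BoundedContinuousFunction (X × ℕ) ℝ) :
    ∫ z, g z * kernelMoments κ z ∂momentMeasure μ
      = ∫ p, momentDual g p ∂(π : Measure (X × Y)) := by
  have hint : Integrable (fun z => g z * kernelMoments κ z) (momentMeasure μ) := by
    refine Integrable.of_bound (C := ‖g‖) ((g.continuous.measurable.mul
      (measurable_kernelMoments h.measurable)).aestronglyMeasurable) (ae_of_all _ fun z => ?_)
    rw [norm_mul]
    exact (mul_le_of_le_one_right (norm_nonneg _) (norm_moments_le_one _ _)).trans
      (g.norm_coe_le_norm z)
  have hdual : Integrable (momentDual g : X × Y → ℝ) (π : Measure (X × Y)) :=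
    (continuous_momentDual g).integrable_of_hasCompactSupport (HasCompactSupport.of_compactSpace _)
  rw [h.eq_compProd] at hdual ⊢
  rw [Measure.integral_compProd hdual, momentMeasure, integral_prod _ hint]
  refine integral_congr_ae (ae_of_all _ fun x => ?_)
  change ∫ n, g (x, n) * ∫ y, testFun Y n y ∂(κ x : Measure Y) ∂_
    = ∫ y, ∫ n, g (x, n) * testFun Y n y ∂_ ∂(κ x : Measure Y)
  simp_rw [← integral_const_mul]
  refine integral_integral_swap (Integrable.of_bound (C := ‖g‖) ?_
    (ae_of_all _ fun z => norm_mul_testFun_le g (x, z.1) z.2))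
  refine (measurable_from_prod_countable_right fun n => ?_).aestronglyMeasurable
  exact (testFun Y n).continuous.measurable.const_mul (g (x, n))

/-- Near a plan, the moments of disintegrations are close to those of the plan in the weak
topology of `L²`. -/
lemma eventually_apply_kernelMoments_lt {μ : ProbabilityMeasure X}
    (l : StrongDual ℝ (Lp ℝ 2 (momentMeasure μ))) {π₀ : ProbabilityMeasure (X × Y)}
    {κ₀ : X → ProbabilityMeasure Y} (h₀ : IsDisintegration π₀ μ κ₀) {u : ℝ}
    (hu : l ((memLp_kernelMoments μ h₀.measurable).toLp _) < u) :
    ∀ᶠ π in 𝓝 π₀, ∀ κ (h : IsDisintegration π μ κ),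
      l ((memLp_kernelMoments μ h.measurable).toLp _) < u := by
  set w := (InnerProductSpace.toDual ℝ (Lp ℝ 2 (momentMeasure μ))).symm l with hw
  have hl : ∀ f, l f = inner ℝ w f := fun f => (InnerProductSpace.toDual_symm_apply).symm
  obtain ⟨R, hR0, hR⟩ : ∃ R : ℝ, 0 < R ∧ ∀ (κ : X → ProbabilityMeasure Y) (hκ : Measurable κ),
      ‖(memLp_kernelMoments μ hκ).toLp _‖ ≤ R := by
    refine ⟨(measureUnivNNReal (momentMeasure μ) : ℝ) ^ (2 : ℝ≥0∞).toReal⁻¹ * 1 + 1,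
      by positivity, fun κ hκ => ?_⟩
    refine (Lp.norm_le_of_ae_bound zero_le_one ?_).trans (le_add_of_nonneg_right zero_le_one)
    filter_upwards [(memLp_kernelMoments μ hκ).coeFn_toLp] with z hz
    rw [hz]
    exact norm_moments_le_one _ _
  set f₀ := (memLp_kernelMoments μ h₀.measurable).toLp _
  set δ := (u - l f₀) / 3 with hδ
  have hδ0 : 0 < δ := by rw [hδ]; linarith
  obtain ⟨g, hg⟩ := (BoundedContinuousFunction.toLp_denseRange ℝ (momentMeasure μ) (p := 2) ℝ
    (by simp)).exists_dist_lt w (div_pos hδ0 hR0)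
  have hpair : ∀ (π : ProbabilityMeasure (X × Y)) (κ : X → ProbabilityMeasure Y)
      (h : IsDisintegration π μ κ),
      |l ((memLp_kernelMoments μ h.measurable).toLp _)
        - ∫ p, momentDual g p ∂(π : Measure (X × Y))| < δ := by
    intro π κ h
    have heq : ∫ p, momentDual g p ∂(π : Measure (X × Y)) =
        inner ℝ (BoundedContinuousFunction.toLp 2 (momentMeasure μ) ℝ g)
          ((memLp_kernelMoments μ h.measurable).toLp _) := by
      rw [← integral_kernelMoments_mul h g, L2.inner_def]
      refine integral_congr_ae ?_
      filter_upwards [(memLp_kernelMoments μ h.measurable).coeFn_toLp,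
        BoundedContinuousFunction.coeFn_toLp (p := 2) (momentMeasure μ) ℝ g] with z h₁ h₂
      rw [h₁, h₂]
      simp [mul_comm]
    rw [heq, hl, ← inner_sub_left]
    calc _ ≤ _ := abs_real_inner_le_norm _ _
      _ ≤ ‖w - BoundedContinuousFunction.toLp 2 (momentMeasure μ) ℝ g‖ * R := by
        gcongr; exact hR κ h.measurable
      _ < δ / R * R := by rw [← dist_eq_norm]; gcongr
      _ = δ := div_mul_cancel₀ _ hR0.ne'
  have hcont : Continuous fun π : ProbabilityMeasure (X × Y) =>
      ∫ p, momentDual g p ∂(π : Measure (X × Y)) :=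
    ProbabilityMeasure.continuous_integral_continuousMap
      (⟨momentDual g, continuous_momentDual g⟩ : C(X × Y, ℝ))
  have h1 := abs_lt.1 (hpair π₀ κ₀ h₀)
  have h2 : ∫ p, momentDual g p ∂(π₀ : Measure (X × Y)) < u - δ := by
    have : l f₀ = u - 3 * δ := by rw [hδ]; ring
    have h3 := h1.1
    change -δ < l f₀ - _ at h3
    linarith
  filter_upwards [hcont.continuousAt.eventually (gt_mem_nhds h2)] with π hπ κ h
  linarith [(abs_lt.1 (hpair π κ h)).2]

end Pairing

section NonnegativeCost

variable {X Y : Type*} [MeasurableSpace X] [MeasurableSpace Y]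

/-- The plan cost for a cost function with values in `ℝ≥0∞`. -/
def lplanCost (μ : ProbabilityMeasure X) (C : X → ProbabilityMeasure Y → ℝ≥0∞)
    (π : ProbabilityMeasure (X × Y)) : ℝ≥0∞ :=
  ⨅ κ ∈ {κ : X → ProbabilityMeasure Y | IsDisintegration π μ κ},
    ∫⁻ x, C x (κ x) ∂(μ : Measure X)

/-- The weak transport value for a cost function with values in `ℝ≥0∞`. -/
def lweakTransport (C : X → ProbabilityMeasure Y → ℝ≥0∞)
    (μ : ProbabilityMeasure X) (ν : ProbabilityMeasure Y) : ℝ≥0∞ :=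
  ⨅ π ∈ {π : ProbabilityMeasure (X × Y) | IsCoupling π μ ν}, lplanCost μ C π

/-- Convexity of a cost function in its measure argument. -/
def ConvexCost (C : X → ProbabilityMeasure Y → ℝ≥0∞) : Prop :=
  ∀ (x : X) (σ τ : ProbabilityMeasure Y) (a b : ℝ≥0) (hab : a + b = 1),
    C x (mix a b hab σ τ) ≤ a * C x σ + b * C x τ

lemma lintegral_mix_le {μ : ProbabilityMeasure X} {C : X → ProbabilityMeasure Y → ℝ≥0∞}
    (hCm : Measurable fun p : X × ProbabilityMeasure Y => C p.1 p.2) (hC : ConvexCost C)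
    {a b : ℝ≥0} (hab : a + b = 1) {κ₁ κ₂ : X → ProbabilityMeasure Y}
    (h₁ : Measurable κ₁) (h₂ : Measurable κ₂) :
    ∫⁻ x, C x (mix a b hab (κ₁ x) (κ₂ x)) ∂(μ : Measure X) ≤
      a * ∫⁻ x, C x (κ₁ x) ∂(μ : Measure X) + b * ∫⁻ x, C x (κ₂ x) ∂(μ : Measure X) := by
  have m₁ : Measurable fun x => C x (κ₁ x) := hCm.comp (measurable_id.prodMk h₁)
  have m₂ : Measurable fun x => C x (κ₂ x) := hCm.comp (measurable_id.prodMk h₂)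
  rw [← lintegral_const_mul _ m₁, ← lintegral_const_mul _ m₂,
    ← lintegral_add_left (m₁.const_mul _)]
  exact lintegral_mono fun x => hC x _ _ a b hab

lemma ENNReal.le_mul_biInf_add_mul_biInf {ι κ : Type*} {s : Set ι} {t : Set κ} {f : ι → ℝ≥0∞}
    {g : κ → ℝ≥0∞} {a b : ℝ≥0} (ha : a ≠ 0) (hb : b ≠ 0) {z : ℝ≥0∞}
    (h : ∀ i ∈ s, ∀ j ∈ t, z ≤ a * f i + b * g j) :
    z ≤ a * (⨅ i ∈ s, f i) + b * ⨅ j ∈ t, g j := by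
  simp only [iInf_subtype', ENNReal.mul_iInf_of_ne (ENNReal.coe_ne_zero.2 ha) ENNReal.coe_ne_top,
    ENNReal.mul_iInf_of_ne (ENNReal.coe_ne_zero.2 hb) ENNReal.coe_ne_top, ENNReal.iInf_add,
    ENNReal.add_iInf]
  exact le_iInf fun j => le_iInf fun i => h i i.2 j j.2

lemma lplanCost_convex {μ : ProbabilityMeasure X} {C : X → ProbabilityMeasure Y → ℝ≥0∞}
    (hCm : Measurable fun p : X × ProbabilityMeasure Y => C p.1 p.2) (hC : ConvexCost C)
    {a b : ℝ≥0} (hab : a + b = 1) {π₁ π₂ π : ProbabilityMeasure (X × Y)}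
    (hπ : (π : Measure (X × Y)) = a • (π₁ : Measure (X × Y)) + b • (π₂ : Measure (X × Y))) :
    lplanCost μ C π ≤ a * lplanCost μ C π₁ + b * lplanCost μ C π₂ := by
  rcases eq_or_ne a 0 with rfl | ha
  · obtain rfl : b = 1 := by simpa using hab
    obtain rfl : π = π₂ := ProbabilityMeasure.toMeasure_injective (by simpa using hπ)
    simp
  rcases eq_or_ne b 0 with rfl | hb
  · obtain rfl : a = 1 := by simpa using hab
    obtain rfl : π = π₁ := ProbabilityMeasure.toMeasure_injective (by simpa using hπ)
    simp
  refine ENNReal.le_mul_biInf_add_mul_biInf ha hb fun κ₁ h₁ κ₂ h₂ => ?_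
  exact (iInf₂_le _ (IsDisintegration.mix hab h₁ h₂ hπ)).trans
    (lintegral_mix_le hCm hC hab h₁.measurable h₂.measurable)

lemma IsCoupling.mix {π₁ π₂ : ProbabilityMeasure (X × Y)} {μ : ProbabilityMeasure X}
    {ν₁ ν₂ ν : ProbabilityMeasure Y} {a b : ℝ≥0} (hab : a + b = 1)
    (h₁ : IsCoupling π₁ μ ν₁) (h₂ : IsCoupling π₂ μ ν₂)
    (hν : (ν : Measure Y) = a • (ν₁ : Measure Y) + b • (ν₂ : Measure Y)) :
    IsCoupling (mix a b hab π₁ π₂) μ ν := by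
  constructor
  · rw [coe_mix, Measure.map_add _ _ measurable_fst, Measure.map_smul,
      Measure.map_smul, h₁.1, h₂.1, ← add_smul, hab, one_smul]
  · rw [coe_mix, Measure.map_add _ _ measurable_snd, Measure.map_smul,
      Measure.map_smul, h₁.2, h₂.2, hν]

lemma lweakTransport_convex {μ : ProbabilityMeasure X} {C : X → ProbabilityMeasure Y → ℝ≥0∞}
    (hCm : Measurable fun p : X × ProbabilityMeasure Y => C p.1 p.2) (hC : ConvexCost C)
    {a b : ℝ≥0} (hab : a + b = 1) {ν₁ ν₂ ν : ProbabilityMeasure Y}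
    (hν : (ν : Measure Y) = a • (ν₁ : Measure Y) + b • (ν₂ : Measure Y)) :
    lweakTransport C μ ν ≤ a * lweakTransport C μ ν₁ + b * lweakTransport C μ ν₂ := by
  rcases eq_or_ne a 0 with rfl | ha
  · obtain rfl : b = 1 := by simpa using hab
    obtain rfl : ν = ν₂ := ProbabilityMeasure.toMeasure_injective (by simpa using hν)
    simp
  rcases eq_or_ne b 0 with rfl | hb
  · obtain rfl : a = 1 := by simpa using hab
    obtain rfl : ν = ν₁ := ProbabilityMeasure.toMeasure_injective (by simpa using hν)
    simp
  refine ENNReal.le_mul_biInf_add_mul_biInf ha hb fun π₁ h₁ π₂ h₂ => ?_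
  have h : mix a b hab π₁ π₂ ∈ {π : ProbabilityMeasure (X × Y) | IsCoupling π μ ν} :=
    IsCoupling.mix hab h₁ h₂ hν
  exact (iInf₂_le _ h).trans (lplanCost_convex hCm hC hab (coe_mix hab π₁ π₂))

end NonnegativeCost

section Semicontinuity

variable {X Y : Type*} [MetricSpace X] [CompactSpace X] [MeasurableSpace X] [BorelSpace X]
  [MetricSpace Y] [CompactSpace Y] [MeasurableSpace Y] [BorelSpace Y]
  {C : X → ProbabilityMeasure Y → ℝ≥0∞}

lemma lowerSemicontinuous_lplanCost
    (hC : LowerSemicontinuous fun p : X × ProbabilityMeasure Y => C p.1 p.2) (hconv : ConvexCost C)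
    (μ : ProbabilityMeasure X) : LowerSemicontinuous (lplanCost μ C) := by
  have hCm := hC.measurable
  intro π₀ t ht
  obtain ⟨s, hts, hs⟩ := exists_between ht
  by_cases hfst : (π₀ : Measure (X × Y)).map Prod.fst = (μ : Measure X)
  swap
  · have hmap := ProbabilityMeasure.continuous_map (continuous_fst (X := X) (Y := Y))
    have hopen : IsOpen {π : ProbabilityMeasure (X × Y) |
        π.map measurable_fst.aemeasurable ≠ μ} := isOpen_ne_fun hmap continuous_const
    have hmem : π₀ ∈ {π : ProbabilityMeasure (X × Y) |
        π.map measurable_fst.aemeasurable ≠ μ} := fun h => hfst (congrArg Subtype.val h)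
    filter_upwards [hopen.mem_nhds hmem] with π hπ
    refine hts.trans_le (le_iInf₂ fun κ hκ => absurd ?_ hπ)
    exact ProbabilityMeasure.toMeasure_injective (IsDisintegration.map_fst hκ)
  obtain ⟨κ₀, h₀⟩ := exists_isDisintegration hfst
  let S : Set (Lp ℝ 2 (momentMeasure μ)) := {f | ∃ κ : X → ProbabilityMeasure Y, Measurable κ ∧
    ∫⁻ x, C x (κ x) ∂(μ : Measure X) ≤ s ∧ f =ᵐ[momentMeasure μ] kernelMoments κ}
  have hS : Convex ℝ S := by
    rintro f ⟨κ₁, m₁, h₁, e₁⟩ g ⟨κ₂, m₂, h₂, e₂⟩ a b ha hb hab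
    lift a to ℝ≥0 using ha
    lift b to ℝ≥0 using hb
    have hab' : a + b = 1 := by exact_mod_cast hab
    refine ⟨fun x => mix a b hab' (κ₁ x) (κ₂ x), measurable_mix hab' m₁ m₂, ?_, ?_⟩
    · refine (lintegral_mix_le hCm hconv hab' m₁ m₂).trans ?_
      calc _ ≤ (a : ℝ≥0∞) * s + b * s := by gcongr
        _ = s := by rw [← add_mul, ← ENNReal.coe_add, hab', ENNReal.coe_one, one_mul]
    · filter_upwards [e₁, e₂, Lp.coeFn_add ((a : ℝ) • f) ((b : ℝ) • g),
        Lp.coeFn_smul (a : ℝ) f, Lp.coeFn_smul (b : ℝ) g] with z h₁ h₂ h₃ h₄ h₅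
      rw [h₃, Pi.add_apply, h₄, h₅, Pi.smul_apply, Pi.smul_apply, h₁, h₂]
      simp [kernelMoments, moments_mix]
  have hnot : (memLp_kernelMoments μ h₀.measurable).toLp _ ∉ closure S := by
    intro hmem
    obtain ⟨fs, hfs, hlim⟩ := mem_closure_iff_seq_limit.1 hmem
    choose κs hκs ht' hae using hfs
    have := lintegral_le_of_tendsto_kernelMoments hCm
      (fun x => hC.comp (Continuous.prodMk_right x))
      hκs hae (memLp_kernelMoments μ h₀.measurable).coeFn_toLp hlim ht'
    exact (hs.trans_le (iInf₂_le κ₀ h₀)).not_ge this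
  obtain ⟨l, u, hlu, hul⟩ := geometric_hahn_banach_point_closed hS.closure isClosed_closure hnot
  filter_upwards [eventually_apply_kernelMoments_lt l h₀ hlu] with π hπ
  refine hts.trans_le (le_iInf₂ fun κ hκ => le_of_not_ge fun hle => ?_)
  have hmem : (memLp_kernelMoments μ hκ.measurable).toLp _ ∈ S :=
    ⟨κ, hκ.measurable, hle, (memLp_kernelMoments μ hκ.measurable).coeFn_toLp⟩
  exact (hπ κ hκ).not_gt (hul _ (subset_closure hmem))

lemma lowerSemicontinuous_lweakTransport
    (hC : LowerSemicontinuous fun p : X × ProbabilityMeasure Y => C p.1 p.2) (hconv : ConvexCost C)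
    (μ : ProbabilityMeasure X) : LowerSemicontinuous (lweakTransport C μ) := by
  intro ν₀ t ht
  obtain ⟨s, hts, hs⟩ := exists_between ht
  have hlsc := lowerSemicontinuous_lplanCost hC hconv μ
  have hsnd : Continuous fun π : ProbabilityMeasure (X × Y) =>
      π.map measurable_snd.aemeasurable :=
    ProbabilityMeasure.continuous_map continuous_snd
  have hclosed := (((hlsc.isClosed_preimage s).isCompact).image hsnd).isClosed
  have hcoupling : ∀ {π : ProbabilityMeasure (X × Y)} {ν : ProbabilityMeasure Y},
      IsCoupling π μ ν → π.map measurable_snd.aemeasurable = ν :=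
    fun h => ProbabilityMeasure.toMeasure_injective h.2
  have hnot : ν₀ ∉ (fun π : ProbabilityMeasure (X × Y) =>
      π.map measurable_snd.aemeasurable) '' (lplanCost μ C ⁻¹' Iic s) := by
    rintro ⟨π, hπ, rfl⟩
    have hfin : lplanCost μ C π < ⊤ := (hπ : _ ≤ s).trans_lt (hs.trans_le le_top)
    obtain ⟨κ, hκ, -⟩ := by simpa only [lplanCost, iInf_lt_iff, exists_prop] using hfin
    exact (hs.trans_le (iInf₂_le π ⟨IsDisintegration.map_fst hκ, rfl⟩)).not_ge hπ
  filter_upwards [hclosed.isOpen_compl.mem_nhds hnot] with ν hν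
  refine hts.trans_le (le_iInf₂ fun π hπ => le_of_not_ge fun hle => hν ⟨π, hle, hcoupling hπ⟩)

end Semicontinuity

section Shift

/-- The order embedding of `[0, ∞]` into the extended reals as `[-M, ∞]`. -/
def shift (M : ℝ≥0) (t : ℝ≥0∞) : EReal := (t : EReal) + ((-M : ℝ) : EReal)

lemma shift_coe (M p : ℝ≥0) : shift M p = ((p - M : ℝ) : EReal) := by
  rw [shift, EReal.coe_nnreal_eq_coe_real, ← EReal.coe_add, sub_eq_add_neg]

lemma shift_top (M : ℝ≥0) : shift M ⊤ = ⊤ := by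
  rw [shift, EReal.coe_ennreal_top, EReal.top_add_coe]

lemma strictMono_shift (M : ℝ≥0) : StrictMono (shift M) := fun _ _ h =>
  EReal.add_lt_add_right_coe (EReal.coe_ennreal_lt_coe_ennreal_iff.2 h) _

lemma continuous_shift (M : ℝ≥0) : Continuous (shift M) := by
  refine continuous_iff_continuousAt.2 fun t => ?_
  exact (EReal.continuousAt_add (p := ((t : EReal), ((-M : ℝ) : EReal)))
    (Or.inr (EReal.coe_ne_bot _)) (Or.inr (EReal.coe_ne_top _))).comp₂
    continuous_coe_ennreal_ereal.continuousAt continuousAt_const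

lemma shift_biInf (M : ℝ≥0) {ι : Type*} (s : Set ι) (f : ι → ℝ≥0∞) :
    shift M (⨅ i ∈ s, f i) = ⨅ i ∈ s, shift M (f i) := by
  simp only [iInf_subtype']
  exact (strictMono_shift M).monotone.map_iInf_of_continuousAt (continuous_shift M).continuousAt
    (shift_top M)

lemma shift_convexComb (M : ℝ≥0) {a b : ℝ≥0} (hab : a + b = 1) (p q : ℝ≥0∞) :
    shift M (a * p + b * q) = ((a : ℝ) : EReal) * shift M p + ((b : ℝ) : EReal) * shift M q := by
  rcases eq_or_ne a 0 with rfl | ha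
  · obtain rfl : b = 1 := by simpa using hab
    simp
  rcases eq_or_ne b 0 with rfl | hb
  · obtain rfl : a = 1 := by simpa using hab
    simp
  have ha' : (0 : ℝ) < a := NNReal.coe_pos.2 (pos_iff_ne_zero.2 ha)
  have hb' : (0 : ℝ) < b := NNReal.coe_pos.2 (pos_iff_ne_zero.2 hb)
  induction p with
  | top =>
    rw [ENNReal.mul_top (ENNReal.coe_ne_zero.2 ha), top_add, shift_top,
      EReal.coe_mul_top_of_pos ha']
    induction q with
    | top => rw [shift_top, EReal.coe_mul_top_of_pos hb', EReal.top_add_top]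
    | coe q => rw [shift_coe, ← EReal.coe_mul, EReal.top_add_coe]
  | coe p =>
    induction q with
    | top =>
      rw [ENNReal.mul_top (ENNReal.coe_ne_zero.2 hb), add_top, shift_top,
        EReal.coe_mul_top_of_pos hb', shift_coe, ← EReal.coe_mul, EReal.coe_add_top]
    | coe q =>
      have h : (a : ℝ) + b = 1 := by exact_mod_cast hab
      rw [← ENNReal.coe_mul, ← ENNReal.coe_mul, ← ENNReal.coe_add, shift_coe, shift_coe, shift_coe,
        ← EReal.coe_mul, ← EReal.coe_mul, ← EReal.coe_add]
      congr 1
      push_cast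
      linear_combination (M : ℝ) * h

lemma exists_shift_eq {M : ℝ≥0} {e : EReal} (h : ((-M : ℝ) : EReal) ≤ e) :
    ∃ t, shift M t = e := by
  induction e with
  | bot => exact absurd (le_bot_iff.1 h) (EReal.coe_ne_bot _)
  | top => exact ⟨⊤, shift_top M⟩
  | coe r =>
    have h' : -(M : ℝ) ≤ r := EReal.coe_le_coe_iff.1 h
    refine ⟨((r + M).toNNReal : ℝ≥0), ?_⟩
    rw [shift_coe, Real.coe_toNNReal _ (by linarith), add_sub_cancel_right]

lemma epos_coe (r : ℝ) : epos r = ENNReal.ofReal r := by simp [epos]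

lemma epos_neg_shift_le (M : ℝ≥0) (t : ℝ≥0∞) : epos (-shift M t) ≤ M := by
  induction t with
  | top => simp [shift_top, epos]
  | coe p =>
    rw [shift_coe, ← EReal.coe_neg, epos_coe, ENNReal.ofReal_le_iff_le_toReal ENNReal.coe_ne_top]
    simp

lemma add_epos_neg_shift (M : ℝ≥0) (t : ℝ≥0∞) :
    t + epos (-shift M t) = epos (shift M t) + M := by
  induction t with
  | top => simp [shift_top, epos]
  | coe p =>
    rw [shift_coe, ← EReal.coe_neg, epos_coe, epos_coe, ← ENNReal.ofReal_coe_nnreal (p := p),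
      ← ENNReal.ofReal_coe_nnreal (p := M)]
    rcases le_total (p : ℝ) M with h | h
    · rw [ENNReal.ofReal_of_nonpos (by linarith : (p - M : ℝ) ≤ 0),
        ← ENNReal.ofReal_add p.coe_nonneg (by linarith), zero_add]
      congr 1
      ring
    · rw [ENNReal.ofReal_of_nonpos (by linarith : -(p - M : ℝ) ≤ 0),
        ← ENNReal.ofReal_add (by linarith) M.coe_nonneg, add_zero]
      congr 1
      ring

lemma eint_shift {α : Type*} [MeasurableSpace α] {μ : Measure α} [IsProbabilityMeasure μ]
    (M : ℝ≥0) {D : α → ℝ≥0∞} (hD : Measurable D) :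
    eint μ (fun x => shift M (D x)) = shift M (∫⁻ x, D x ∂μ) := by
  have hle : ∫⁻ x, epos (-shift M (D x)) ∂μ ≤ M := by
    simpa using lintegral_mono (μ := μ) fun x => epos_neg_shift_le M (D x)
  have hadd : ∫⁻ x, D x ∂μ + ∫⁻ x, epos (-shift M (D x)) ∂μ
      = ∫⁻ x, epos (shift M (D x)) ∂μ + M := by
    rw [← lintegral_add_left hD]
    simp_rw [add_epos_neg_shift]
    rw [lintegral_add_right _ measurable_const]
    simp
  rw [eint]
  generalize ∫⁻ x, epos (-shift M (D x)) ∂μ = B at *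
  generalize ∫⁻ x, epos (shift M (D x)) ∂μ = A at *
  generalize ∫⁻ x, D x ∂μ = I at *
  lift B to ℝ≥0 using ne_top_of_le_ne_top ENNReal.coe_ne_top hle
  induction I with
  | top =>
    obtain rfl : A = ⊤ := by simpa using hadd.symm
    rw [shift_top, EReal.coe_ennreal_top, EReal.coe_nnreal_eq_coe_real, EReal.top_sub_coe]
  | coe I =>
    have hA : A ≠ ⊤ := fun h => by
      rw [h, top_add, ← ENNReal.coe_add] at hadd
      exact ENNReal.coe_ne_top hadd
    lift A to ℝ≥0 using hA
    have h : (I : ℝ) + B = A + M := by exact_mod_cast hadd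
    rw [shift_coe, EReal.coe_nnreal_eq_coe_real, EReal.coe_nnreal_eq_coe_real, ← EReal.coe_sub]
    congr 1
    linarith

variable {X Y : Type*} [MeasurableSpace X] [MeasurableSpace Y]

lemma planCost_shift {μ : ProbabilityMeasure X} {C : X → ProbabilityMeasure Y → ℝ≥0∞}
    (hCm : Measurable fun p : X × ProbabilityMeasure Y => C p.1 p.2) (M : ℝ≥0)
    (π : ProbabilityMeasure (X × Y)) :
    planCost μ (fun x σ => shift M (C x σ)) π = shift M (lplanCost μ C π) := by
  rw [planCost, lplanCost, shift_biInf]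
  refine iInf_congr fun κ => iInf_congr fun hκ => eint_shift M ?_
  exact hCm.comp (measurable_id.prodMk (IsDisintegration.measurable hκ))

lemma weakTransport_shift {μ : ProbabilityMeasure X} {C : X → ProbabilityMeasure Y → ℝ≥0∞}
    (hCm : Measurable fun p : X × ProbabilityMeasure Y => C p.1 p.2) (M : ℝ≥0)
    (ν : ProbabilityMeasure Y) :
    weakTransport (fun x σ => shift M (C x σ)) μ ν = shift M (lweakTransport C μ ν) := by
  simp only [weakTransport, lweakTransport, shift_biInf, planCost_shift hCm]

end Shift

/-- Convexity and lower semicontinuity of the plan cost on the set of couplings,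
and of the optimal weak transport value in the target measure. -/
theorem planCost_convex_lsc
    {X Y : Type*} [MetricSpace X] [CompactSpace X] [MeasurableSpace X] [BorelSpace X]
    [MetricSpace Y] [CompactSpace Y] [MeasurableSpace Y] [BorelSpace Y]
    (c : X → ProbabilityMeasure Y → EReal)
    (hbot : ∀ x σ, c x σ ≠ ⊥)
    (hbdd : ∃ m : ℝ, ∀ x σ, (m : EReal) ≤ c x σ)
    (hproper : ∀ x, ∃ σ, c x σ ≠ ⊤)
    (hlsc : LowerSemicontinuous (fun p : X × ProbabilityMeasure Y => c p.1 p.2))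
    (hconv : ∀ (x : X) (σ₁ σ₂ τ : ProbabilityMeasure Y) (a b : ℝ≥0), a + b = 1 →
        (τ : Measure Y) = a • (σ₁ : Measure Y) + b • (σ₂ : Measure Y) →
        c x τ ≤ ((a : ℝ) : EReal) * c x σ₁ + ((b : ℝ) : EReal) * c x σ₂)
    (μ : ProbabilityMeasure X) :
    (∀ (ν : ProbabilityMeasure Y) (π₁ π₂ π : ProbabilityMeasure (X × Y)) (a b : ℝ≥0),
        a + b = 1 → IsCoupling π₁ μ ν → IsCoupling π₂ μ ν →
        (π : Measure (X × Y)) = a • (π₁ : Measure (X × Y)) + b • (π₂ : Measure (X × Y)) →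
        planCost μ c π ≤
          ((a : ℝ) : EReal) * planCost μ c π₁ + ((b : ℝ) : EReal) * planCost μ c π₂) ∧
    (∀ ν : ProbabilityMeasure Y,
        LowerSemicontinuousOn (planCost μ c)
          {π : ProbabilityMeasure (X × Y) | IsCoupling π μ ν}) ∧
    (∀ (ν₁ ν₂ ν : ProbabilityMeasure Y) (a b : ℝ≥0), a + b = 1 →
        (ν : Measure Y) = a • (ν₁ : Measure Y) + b • (ν₂ : Measure Y) →
        weakTransport c μ ν ≤
          ((a : ℝ) : EReal) * weakTransport c μ ν₁ +
            ((b : ℝ) : EReal) * weakTransport c μ ν₂) ∧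
    LowerSemicontinuous (fun ν : ProbabilityMeasure Y => weakTransport c μ ν) := by

  obtain ⟨m, hm⟩ := hbdd
  have hM : ∀ x σ, ∃ t, shift (-m).toNNReal t = c x σ := fun x σ =>
    exists_shift_eq (le_trans (EReal.coe_le_coe_iff.2 (by
      linarith [Real.le_coe_toNNReal (-m)])) (hm x σ))
  generalize (-m).toNNReal = M at hM
  choose C hCc using hM
  obtain rfl : (fun x σ => shift M (C x σ)) = c := funext fun x => funext fun σ => hCc x σ
  have hC : LowerSemicontinuous fun p : X × ProbabilityMeasure Y => C p.1 p.2 := by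
    intro p t ht
    filter_upwards [hlsc p _ (strictMono_shift M ht)] with q hq
    exact (strictMono_shift M).lt_iff_lt.1 hq
  have hconvC : ConvexCost C := by
    intro x σ τ a b hab
    rw [← (strictMono_shift M).le_iff_le, shift_convexComb M hab]
    exact hconv x σ τ _ a b hab (coe_mix hab σ τ)
  have hCm := hC.measurable
  have hmono := (strictMono_shift M).monotone
  have hplan : planCost μ (fun x σ => shift M (C x σ)) = fun π => shift M (lplanCost μ C π) :=
    funext (planCost_shift hCm M)
  simp only [hplan, weakTransport_shift hCm]
  refine ⟨fun ν π₁ π₂ π a b hab _ _ hπ => ?_, fun ν => ?_, fun ν₁ ν₂ ν a b hab hν => ?_, ?_⟩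
  · rw [← shift_convexComb M hab]
    exact hmono (lplanCost_convex hCm hconvC hab hπ)
  · exact ((continuous_shift M).comp_lowerSemicontinuous
      (lowerSemicontinuous_lplanCost hC hconvC μ) hmono).lowerSemicontinuousOn _
  · rw [← shift_convexComb M hab]
    exact hmono (lweakTransport_convex hCm hconvC hab hν)
  · exact (continuous_shift M).comp_lowerSemicontinuous
      (lowerSemicontinuous_lweakTransport hC hconvC μ) hmono
end
end
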